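/- arXiv:2407.15235 — 3 statements merged into one kernel-verified Lean document; each statement's English description precedes it below -/
import Mathlib

section
/- For every positive integer M and all disjoint subsets S, T ⊆ V with |S ∪ T| ≤ M, one has ∑_{j∈T} (E(S) − E(S∪{j})) ≥ γ_D · (E(S) − E(S∪T)), where γ_D = λ/(λ + M·G²). Equivalently, for any constant L_max, the set function F_λ(S) = L_max − E(S) is γ_D-weakly submodular on subsets of size at most M. -/
open scoped BigOperators

/-- The regularized gradient-matching objective
`ℓ(w) = ‖∑ᵢ wᵢ gᵢ − b‖₂² + λ ∑ᵢ wᵢ²`. -/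
noncomputable def ell {V : Type*} [Fintype V] {d : ℕ}
    (g : V → EuclideanSpace ℝ (Fin d)) (b : EuclideanSpace ℝ (Fin d))
    (lam : ℝ) (w : V → ℝ) : ℝ :=
  ‖(∑ i, w i • g i) - b‖ ^ 2 + lam * ∑ i, (w i) ^ 2

/-- `E(S) = inf { ℓ(w) : w supported on S }`. -/
noncomputable def EErr {V : Type*} [Fintype V] {d : ℕ}
    (g : V → EuclideanSpace ℝ (Fin d)) (b : EuclideanSpace ℝ (Fin d))
    (lam : ℝ) (S : Finset V) : ℝ :=
  sInf {y | ∃ w : V → ℝ, (∀ i ∉ S, w i = 0) ∧ y = ell g b lam w}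

/-!
Appending the basis vector `√λ eᵢ` to each gradient `gᵢ`, and `0` to the target `b`, turns the
regularized objective into a plain least-squares objective `‖∑ wᵢ φᵢ - β‖²`. Hence `E(S)` is the
squared length of the residual `r` of `β` after projecting onto `span {φᵢ | i ∈ S}`, and enlarging
`S` decreases it by `‖q‖²`, where `q` is the difference of the two projections. Since the new
residual `r - q` is orthogonal to the larger span, `⟪r, φⱼ⟫ = ⟪q, φⱼ⟫` for every new `φⱼ`, and two
applications of the Cauchy–Schwarz inequality finish the proof: the gain of a single `j` is at least
`⟪r, φⱼ⟫² / ‖φⱼ‖²`, while that of `T` is at most `λ⁻¹ ∑_{j ∈ T} ⟪r, φⱼ⟫²`, because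
`λ ∑ wᵢ² ≤ ‖∑ wᵢ φᵢ‖²`. As `‖φⱼ‖² = ‖gⱼ‖² + λ`, the resulting ratio is `λ / (λ + G²)`, which is at
least `λ / (λ + M G²)`.
-/

open scoped InnerProductSpace

section NestedProjections

variable {H : Type*} [NormedAddCommGroup H] [InnerProductSpace ℝ H]
  {U W : Submodule ℝ H} [U.HasOrthogonalProjection] [W.HasOrthogonalProjection]

theorem inner_sub_starProjection_eq_of_mem (x : H) {y : H} (hy : y ∈ W) :
    ⟪x - U.starProjection x, y⟫_ℝ = ⟪W.starProjection x - U.starProjection x, y⟫_ℝ := by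
  have orthogonal : ⟪x - W.starProjection x, y⟫_ℝ = 0 :=
    Submodule.starProjection_inner_eq_zero x y hy
  rw [← sub_add_sub_cancel x (W.starProjection x), inner_add_left, orthogonal, zero_add]

theorem starProjection_sub_starProjection_mem (hUW : U ≤ W) (x : H) :
    W.starProjection x - U.starProjection x ∈ W :=
  W.sub_mem (W.starProjection_apply_mem x) (hUW (U.starProjection_apply_mem x))

theorem norm_sub_starProjection_sq_sub_of_le (hUW : U ≤ W) (x : H) :
    ‖x - U.starProjection x‖ ^ 2 - ‖x - W.starProjection x‖ ^ 2 =
      ‖W.starProjection x - U.starProjection x‖ ^ 2 := by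
  have orthogonal : ⟪x - W.starProjection x, W.starProjection x - U.starProjection x⟫_ℝ = 0 :=
    Submodule.starProjection_inner_eq_zero x _ (starProjection_sub_starProjection_mem hUW x)
  rw [← sub_add_sub_cancel x (W.starProjection x) (U.starProjection x), norm_add_sq_real,
    orthogonal]
  ring

end NestedProjections

section LeastSquares

variable {ι H : Type*} [NormedAddCommGroup H] [InnerProductSpace ℝ H]

/-- The span of the features `φ i` with `i ∈ S`. -/
abbrev featureSpan (φ : ι → H) (S : Finset ι) : Submodule ℝ H :=
  Submodule.span ℝ (φ '' S)

instance (φ : ι → H) (S : Finset ι) : FiniteDimensional ℝ (featureSpan φ S) :=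
  FiniteDimensional.span_of_finite ℝ (S.finite_toSet.image φ)

theorem apply_mem_featureSpan (φ : ι → H) {S : Finset ι} {i : ι} (hi : i ∈ S) :
    φ i ∈ featureSpan φ S :=
  Submodule.subset_span ⟨i, hi, rfl⟩

theorem featureSpan_mono (φ : ι → H) {S S' : Finset ι} (hS : S ⊆ S') :
    featureSpan φ S ≤ featureSpan φ S' :=
  Submodule.span_mono (Set.image_mono hS)

theorem mul_norm_sq_le_sum_inner_sq_of_mem_featureSpan {φ : ι → H} {S : Finset ι} {m : ℝ}
    (hm : 0 ≤ m) (hφ : ∀ w : ι → ℝ, m * ∑ i ∈ S, w i ^ 2 ≤ ‖∑ i ∈ S, w i • φ i‖ ^ 2)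
    {q : H} (hq : q ∈ featureSpan φ S) :
    m * ‖q‖ ^ 2 ≤ ∑ i ∈ S, ⟪q, φ i⟫_ℝ ^ 2 := by
  obtain ⟨w, hw⟩ := (Submodule.mem_span_image_finset_iff_exists_fun' ℝ).1 hq
  have norm_sq_eq : ‖q‖ ^ 2 = ∑ i ∈ S, w i * ⟪q, φ i⟫_ℝ := by
    rw [← real_inner_self_eq_norm_sq]
    nth_rewrite 2 [← hw]
    simp only [inner_sum, real_inner_smul_right]
  rcases (sq_nonneg ‖q‖).eq_or_lt with norm_sq_zero | norm_sq_pos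
  · rw [← norm_sq_zero, mul_zero]
    positivity
  refine le_of_mul_le_mul_right ?_ norm_sq_pos
  calc m * ‖q‖ ^ 2 * ‖q‖ ^ 2
      = m * (∑ i ∈ S, w i * ⟪q, φ i⟫_ℝ) ^ 2 := by rw [← norm_sq_eq]; ring
    _ ≤ m * ((∑ i ∈ S, w i ^ 2) * ∑ i ∈ S, ⟪q, φ i⟫_ℝ ^ 2) := by
        gcongr
        exact Finset.sum_mul_sq_le_sq_mul_sq _ _ _
    _ = (∑ i ∈ S, ⟪q, φ i⟫_ℝ ^ 2) * (m * ∑ i ∈ S, w i ^ 2) := by ring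
    _ ≤ (∑ i ∈ S, ⟪q, φ i⟫_ℝ ^ 2) * ‖q‖ ^ 2 := by
        gcongr
        exact hw ▸ hφ w

/-- The least-squares residual of the target `β` after regression on the features `φ i`, `i ∈ S`:
the component of `β` orthogonal to their span. Its squared norm is the regression error. -/
noncomputable def spanResidual (φ : ι → H) (β : H) (S : Finset ι) : H :=
  β - (featureSpan φ S).starProjection β

theorem inner_spanResidual_eq_zero (φ : ι → H) (β : H) {S : Finset ι} {i : ι} (hi : i ∈ S) :
    ⟪spanResidual φ β S, φ i⟫_ℝ = 0 :=
  Submodule.starProjection_inner_eq_zero β _ (apply_mem_featureSpan φ hi)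

theorem isLeast_norm_sq_spanResidual [Fintype ι] (φ : ι → H) (β : H) (S : Finset ι) :
    IsLeast {y | ∃ w : ι → ℝ, (∀ i ∉ S, w i = 0) ∧ y = ‖∑ i, w i • φ i - β‖ ^ 2}
      (‖spanResidual φ β S‖ ^ 2) := by
  classical
  constructor
  · obtain ⟨c, hc⟩ := (Submodule.mem_span_image_finset_iff_exists_fun' ℝ).1
      ((featureSpan φ S).starProjection_apply_mem β)
    refine ⟨fun i => if i ∈ S then c i else 0, fun i hi => if_neg hi, ?_⟩
    simp only [ite_smul, zero_smul, Finset.sum_ite_mem, Finset.univ_inter]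
    rw [hc, spanResidual, norm_sub_rev]
  · rintro _ ⟨w, hw, rfl⟩
    have sum_mem : ∑ i, w i • φ i ∈ featureSpan φ S := by
      refine Submodule.sum_mem _ fun i _ => ?_
      by_cases hi : i ∈ S
      · exact Submodule.smul_mem _ _ (apply_mem_featureSpan φ hi)
      · simp [hw i hi]
    rw [norm_sub_rev]
    gcongr
    rw [spanResidual, Submodule.starProjection_minimal]
    exact ciInf_le ⟨0, Set.forall_mem_range.2 fun _ => norm_nonneg _⟩
      (⟨_, sum_mem⟩ : featureSpan φ S)

theorem norm_sq_spanResidual_anti (φ : ι → H) (β : H) {S S' : Finset ι} (hS : S ⊆ S') :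
    ‖spanResidual φ β S'‖ ^ 2 ≤ ‖spanResidual φ β S‖ ^ 2 := by
  rw [← sub_nonneg, spanResidual, spanResidual,
    norm_sub_starProjection_sq_sub_of_le (featureSpan_mono φ hS)]
  positivity

theorem inner_spanResidual_sq_le (φ : ι → H) (β : H) {S S' : Finset ι} (hS : S ⊆ S') {j : ι}
    (hj : j ∈ S') :
    ⟪spanResidual φ β S, φ j⟫_ℝ ^ 2 ≤
      ‖φ j‖ ^ 2 * (‖spanResidual φ β S‖ ^ 2 - ‖spanResidual φ β S'‖ ^ 2) := by
  rw [spanResidual, spanResidual, norm_sub_starProjection_sq_sub_of_le (featureSpan_mono φ hS),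
    inner_sub_starProjection_eq_of_mem β (apply_mem_featureSpan φ hj), mul_comm, ← mul_pow,
    ← sq_abs]
  gcongr
  exact abs_real_inner_le_norm _ _

variable [DecidableEq ι]

theorem mul_norm_sq_spanResidual_sub_le_sum_inner_sq {φ : ι → H} (β : H) {S T : Finset ι} {m : ℝ}
    (hm : 0 ≤ m)
    (hφ : ∀ w : ι → ℝ, m * ∑ i ∈ S ∪ T, w i ^ 2 ≤ ‖∑ i ∈ S ∪ T, w i • φ i‖ ^ 2) :
    m * (‖spanResidual φ β S‖ ^ 2 - ‖spanResidual φ β (S ∪ T)‖ ^ 2) ≤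
      ∑ j ∈ T, ⟪spanResidual φ β S, φ j⟫_ℝ ^ 2 := by
  have hle : featureSpan φ S ≤ featureSpan φ (S ∪ T) :=
    featureSpan_mono φ Finset.subset_union_left
  let q := (featureSpan φ (S ∪ T)).starProjection β - (featureSpan φ S).starProjection β
  calc m * (‖spanResidual φ β S‖ ^ 2 - ‖spanResidual φ β (S ∪ T)‖ ^ 2)
      = m * ‖q‖ ^ 2 := congrArg (m * ·) (norm_sub_starProjection_sq_sub_of_le hle β)
    _ ≤ ∑ i ∈ S ∪ T, ⟪q, φ i⟫_ℝ ^ 2 :=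
        mul_norm_sq_le_sum_inner_sq_of_mem_featureSpan hm hφ
          (starProjection_sub_starProjection_mem hle β)
    _ = ∑ i ∈ S ∪ T, ⟪spanResidual φ β S, φ i⟫_ℝ ^ 2 :=
        Finset.sum_congr rfl fun i hi => congrArg (· ^ 2)
          (inner_sub_starProjection_eq_of_mem β (apply_mem_featureSpan φ hi)).symm
    _ = ∑ j ∈ T, ⟪spanResidual φ β S, φ j⟫_ℝ ^ 2 := by
        refine (Finset.sum_subset Finset.subset_union_right fun i hi hiT => ?_).symm
        have hiS : i ∈ S := (Finset.mem_union.1 hi).resolve_right hiT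
        rw [inner_spanResidual_eq_zero φ β hiS, zero_pow two_ne_zero]

theorem weakly_submodular_norm_sq_spanResidual {φ : ι → H} (β : H) {S T : Finset ι} {m L : ℝ}
    (hm : 0 ≤ m)
    (hφ : ∀ w : ι → ℝ, m * ∑ i ∈ S ∪ T, w i ^ 2 ≤ ‖∑ i ∈ S ∪ T, w i • φ i‖ ^ 2)
    (hL : ∀ j ∈ T, ‖φ j‖ ^ 2 ≤ L) :
    m * (‖spanResidual φ β S‖ ^ 2 - ‖spanResidual φ β (S ∪ T)‖ ^ 2) ≤
      L * ∑ j ∈ T, (‖spanResidual φ β S‖ ^ 2 - ‖spanResidual φ β (S ∪ {j})‖ ^ 2) := by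
  refine (mul_norm_sq_spanResidual_sub_le_sum_inner_sq β hm hφ).trans ?_
  rw [Finset.mul_sum]
  refine Finset.sum_le_sum fun j hj => ?_
  have hS : S ⊆ S ∪ {j} := Finset.subset_union_left
  calc ⟪spanResidual φ β S, φ j⟫_ℝ ^ 2
      ≤ ‖φ j‖ ^ 2 * (‖spanResidual φ β S‖ ^ 2 - ‖spanResidual φ β (S ∪ {j})‖ ^ 2) :=
        inner_spanResidual_sq_le φ β hS (by simp)
    _ ≤ L * (‖spanResidual φ β S‖ ^ 2 - ‖spanResidual φ β (S ∪ {j})‖ ^ 2) :=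
        mul_le_mul_of_nonneg_right (hL j hj) (sub_nonneg.2 (norm_sq_spanResidual_anti φ β hS))

end LeastSquares

section Ridge

variable {ι E : Type*} [Fintype ι] [DecidableEq ι] [NormedAddCommGroup E]

/-- The augmented feature `(g i, √lam eᵢ)`, whose second component accounts for the penalty
`lam * ∑ i, w i ^ 2`. -/
noncomputable def ridgeFeature (g : ι → E) (lam : ℝ) (i : ι) :
    WithLp 2 (E × EuclideanSpace ℝ ι) :=
  WithLp.toLp 2 (g i, EuclideanSpace.single i √lam)

theorem norm_ridgeFeature_sq (g : ι → E) {lam : ℝ} (hlam : 0 ≤ lam) (i : ι) :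
    ‖ridgeFeature g lam i‖ ^ 2 = lam + ‖g i‖ ^ 2 := by
  simp [ridgeFeature, WithLp.prod_norm_sq_eq_of_L2, Real.sq_sqrt hlam, add_comm]

variable [InnerProductSpace ℝ E]

theorem norm_sq_sum_ridgeFeature_sub (g : ι → E) (b : E) {lam : ℝ} (hlam : 0 ≤ lam)
    (S : Finset ι) (w : ι → ℝ) :
    ‖∑ i ∈ S, w i • ridgeFeature g lam i - WithLp.toLp 2 (b, 0)‖ ^ 2 =
      ‖(∑ i ∈ S, w i • g i) - b‖ ^ 2 + lam * ∑ i ∈ S, w i ^ 2 := by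
  have fst_eq : (∑ i ∈ S, w i • ridgeFeature g lam i - WithLp.toLp 2 (b, 0)).fst =
      (∑ i ∈ S, w i • g i) - b := by
    simp [ridgeFeature, WithLp.fst, Prod.fst_sum]
  have snd_apply (k : ι) :
      (∑ i ∈ S, w i • ridgeFeature g lam i - WithLp.toLp 2 (b, 0)).snd k =
        if k ∈ S then √lam * w k else 0 := by
    simp [ridgeFeature, WithLp.snd, Prod.snd_sum, Pi.single_apply, mul_comm]
  rw [WithLp.prod_norm_sq_eq_of_L2, fst_eq, EuclideanSpace.real_norm_sq_eq]
  simp only [snd_apply, ite_pow, mul_pow, Real.sq_sqrt hlam, Finset.mul_sum, zero_pow two_ne_zero,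
    Finset.sum_ite_mem, Finset.univ_inter]

theorem mul_sum_sq_le_norm_sq_sum_ridgeFeature (g : ι → E) {lam : ℝ} (hlam : 0 ≤ lam)
    (S : Finset ι) (w : ι → ℝ) :
    lam * ∑ i ∈ S, w i ^ 2 ≤ ‖∑ i ∈ S, w i • ridgeFeature g lam i‖ ^ 2 := by
  calc lam * ∑ i ∈ S, w i ^ 2
      ≤ ‖(∑ i ∈ S, w i • g i) - 0‖ ^ 2 + lam * ∑ i ∈ S, w i ^ 2 :=
        le_add_of_nonneg_left (sq_nonneg _)
    _ = ‖∑ i ∈ S, w i • ridgeFeature g lam i - WithLp.toLp 2 0‖ ^ 2 :=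
        (norm_sq_sum_ridgeFeature_sub g 0 hlam S w).symm
    _ = ‖∑ i ∈ S, w i • ridgeFeature g lam i‖ ^ 2 := by rw [WithLp.toLp_zero, sub_zero]

/-- The ridge-regression error of the target `b` on the features `g i`, `i ∈ S`: the extension of
`EErr` to features in an arbitrary real inner product space. -/
noncomputable def ridgeErr (g : ι → E) (b : E) (lam : ℝ) (S : Finset ι) : ℝ :=
  sInf {y | ∃ w : ι → ℝ, (∀ i ∉ S, w i = 0) ∧
    y = ‖(∑ i, w i • g i) - b‖ ^ 2 + lam * ∑ i, (w i) ^ 2}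

theorem ridgeErr_eq_norm_sq_spanResidual (g : ι → E) (b : E) {lam : ℝ} (hlam : 0 ≤ lam)
    (S : Finset ι) :
    ridgeErr g b lam S = ‖spanResidual (ridgeFeature g lam) (WithLp.toLp 2 (b, 0)) S‖ ^ 2 := by
  simp only [ridgeErr, ← norm_sq_sum_ridgeFeature_sub g b hlam]
  exact (isLeast_norm_sq_spanResidual _ _ S).csInf_eq

theorem weakly_submodular_gradient_matching_general (g : ι → E) (b : E) {lam K : ℝ}
    (hlam : 0 < lam) (S : Finset ι) {T : Finset ι} (hK : ∀ j ∈ T, ‖g j‖ ^ 2 ≤ K) :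
    lam / (lam + K) * (ridgeErr g b lam S - ridgeErr g b lam (S ∪ T)) ≤
      ∑ j ∈ T, (ridgeErr g b lam S - ridgeErr g b lam (S ∪ {j})) := by
  rcases T.eq_empty_or_nonempty with rfl | ⟨j, hj⟩
  · simp
  have lam_add_pos : 0 < lam + K := add_pos_of_pos_of_nonneg hlam ((sq_nonneg _).trans (hK j hj))
  rw [div_mul_eq_mul_div, div_le_iff₀' lam_add_pos]
  simp only [ridgeErr_eq_norm_sq_spanResidual g b hlam.le]
  refine weakly_submodular_norm_sq_spanResidual _ hlam.le
    (mul_sum_sq_le_norm_sq_sum_ridgeFeature g hlam.le _) fun i hi => ?_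
  rw [norm_ridgeFeature_sq g hlam.le]
  exact add_le_add_right (hK i hi) lam

end Ridge

/-- The set function `F_λ(S) = L_max − E(S)` is `γ_D`-weakly submodular on
subsets of size at most `M`, where `γ_D = λ/(λ + M G²)`. -/
theorem weakly_submodular_gradient_matching
    {V : Type*} [Fintype V] [DecidableEq V] {d : ℕ} (hd : 1 ≤ d)
    (g : V → EuclideanSpace ℝ (Fin d)) (G : ℝ) (hG : ∀ i, ‖g i‖ ≤ G)
    (b : EuclideanSpace ℝ (Fin d)) (lam : ℝ) (hlam : 0 < lam)
    (M : ℕ) (hM : 0 < M)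
    (S T : Finset V) (hST : Disjoint S T) (hcard : (S ∪ T).card ≤ M) :
    ∑ j ∈ T, (EErr g b lam S - EErr g b lam (S ∪ {j})) ≥
      (lam / (lam + M * G ^ 2)) * (EErr g b lam S - EErr g b lam (S ∪ T)) := by
  have norm_sq_le (j : V) : ‖g j‖ ^ 2 ≤ M * G ^ 2 :=
    (pow_le_pow_left₀ (norm_nonneg _) (hG j) 2).trans
      (le_mul_of_one_le_left (sq_nonneg G) (Nat.one_le_cast.2 hM))
  exact weakly_submodular_gradient_matching_general g b hlam S fun j _ => norm_sq_le j
end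

section
/- Let n ≥ 1, let f : ℝⁿ → ℝ be differentiable, let 0 < m ≤ L, and let M ∈ ℕ. Assume (restricted strong convexity) f(v) ≥ f(u) + ⟨∇f(u), v − u⟩ + (m/2)‖v − u‖₂² for all u, v ∈ ℝⁿ, and (restricted smoothness) f(v) ≤ f(u) + ⟨∇f(u), v − u⟩ + (L/2)‖v − u‖₂² whenever supp(u) ∪ supp(v) has cardinality at most M. For S ⊆ {1,…,n} define E(S) = inf{ f(w) : w ∈ ℝⁿ, w_j = 0 for j ∉ S }, and assume each such infimum is attained. Then for all disjoint S, T ⊆ {1,…,n} with |S ∪ T| ≤ M, ∑_{j∈T} (E(S) − E(S∪{j})) ≥ (m/L)·(E(S) − E(S∪T)). -/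
open scoped BigOperators RealInnerProductSpace

/-- `E(S) = inf { f(w) : w ∈ ℝⁿ supported on S }`. -/
noncomputable def EInf {n : ℕ} (f : EuclideanSpace ℝ (Fin n) → ℝ)
    (S : Finset (Fin n)) : ℝ :=
  sInf {y | ∃ w : EuclideanSpace ℝ (Fin n), (∀ j ∉ S, w j = 0) ∧ y = f w}

/-!
For each `A ⊆ S ∪ T` the two quadratic bounds make `f` continuous and coercive on the vectors
supported on `A`, so `f` attains its minimum there. Let `u` minimise `f` over the vectors supported
on `S`, and let `g` be the gradient of `f` at `u`. A step of length `g j / L` against coordinate `j`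
keeps `u` supported on `S ∪ {j}` and, by smoothness, lowers `f` by at least `g j ^ 2 / (2 * L)`. For
`j ∈ T` this bounds the gain `E(S) - E(S ∪ {j})` from below; for `j ∈ S` it contradicts minimality
unless `g j = 0`. Conversely, minimising the strong convexity bound coordinatewise shows that no
vector supported on `S ∪ T` can lower `f` by more than `∑ j ∈ S ∪ T, g j ^ 2 / (2 * m)`, in which
only the coordinates in `T` contribute.
-/

section QuadraticBounds

open Filter Topology

variable {E : Type*} [NormedAddCommGroup E] [InnerProductSpace ℝ E]
  {f : E → ℝ} {g : E → E} {m L : ℝ} {K K' : Set E}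

/-- First-order `m`-strong convexity of `f` on `K`. The field `g` plays the role of the gradient;
it is a separate argument because only its pairing with directions along `K` matters. -/
def HasQuadraticLowerBoundOn (f : E → ℝ) (g : E → E) (m : ℝ) (K : Set E) : Prop :=
  ∀ u ∈ K, ∀ v ∈ K, f u + ⟪g u, v - u⟫ + m / 2 * ‖v - u‖ ^ 2 ≤ f v

/-- First-order `L`-smoothness of `f` on `K`. The field `g` plays the role of the gradient;
it is a separate argument because only its pairing with directions along `K` matters. -/
def HasQuadraticUpperBoundOn (f : E → ℝ) (g : E → E) (L : ℝ) (K : Set E) : Prop :=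
  ∀ u ∈ K, ∀ v ∈ K, f v ≤ f u + ⟪g u, v - u⟫ + L / 2 * ‖v - u‖ ^ 2

theorem HasQuadraticLowerBoundOn.mono (hlower : HasQuadraticLowerBoundOn f g m K) (hK : K' ⊆ K) :
    HasQuadraticLowerBoundOn f g m K' :=
  fun u hu v hv => hlower u (hK hu) v (hK hv)

theorem HasQuadraticUpperBoundOn.mono (hupper : HasQuadraticUpperBoundOn f g L K) (hK : K' ⊆ K) :
    HasQuadraticUpperBoundOn f g L K' :=
  fun u hu v hv => hupper u (hK hu) v (hK hv)

theorem tendsto_quadratic_model (c b : ℝ) (a u : E) :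
    Tendsto (fun v => c + ⟪a, v - u⟫ + b * ‖v - u‖ ^ 2) (𝓝 u) (𝓝 c) := by
  have hcont : Continuous fun v => c + ⟪a, v - u⟫ + b * ‖v - u‖ ^ 2 := by fun_prop
  simpa using hcont.tendsto u

theorem HasQuadraticLowerBoundOn.continuousOn (hlower : HasQuadraticLowerBoundOn f g m K)
    (hupper : HasQuadraticUpperBoundOn f g L K) : ContinuousOn f K := fun u hu =>
  tendsto_of_tendsto_of_tendsto_of_le_of_le'
    ((tendsto_quadratic_model (f u) (m / 2) (g u) u).mono_left nhdsWithin_le_nhds)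
    ((tendsto_quadratic_model (f u) (L / 2) (g u) u).mono_left nhdsWithin_le_nhds)
    (eventually_mem_nhdsWithin.mono (hlower u hu)) (eventually_mem_nhdsWithin.mono (hupper u hu))

theorem HasQuadraticLowerBoundOn.le_of_two_mul_norm_div_le
    (hlower : HasQuadraticLowerBoundOn f g m K) (hm : 0 < m) {u v : E} (hu : u ∈ K) (hv : v ∈ K)
    (hfar : 2 * ‖g u‖ / m ≤ ‖v - u‖) : f u ≤ f v := by
  have hinner : -(‖g u‖ * ‖v - u‖) ≤ ⟪g u, v - u⟫ :=
    (abs_le.mp (abs_real_inner_le_norm (g u) (v - u))).1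
  have hquad : ‖g u‖ * ‖v - u‖ ≤ m / 2 * ‖v - u‖ ^ 2 := by
    rw [div_le_iff₀ hm] at hfar
    nlinarith [norm_nonneg (v - u)]
  linarith [hlower u hu v hv]

theorem HasQuadraticLowerBoundOn.exists_isMinOn [ProperSpace E]
    (hlower : HasQuadraticLowerBoundOn f g m K) (hm : 0 < m) (hf : ContinuousOn f K)
    (hclosed : IsClosed K) (hne : K.Nonempty) : ∃ u ∈ K, IsMinOn f K u := by
  obtain ⟨u, hu⟩ := hne
  refine hf.exists_isMinOn' hclosed hu ?_
  rw [eventually_inf_principal]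
  filter_upwards [(isCompact_closedBall u (2 * ‖g u‖ / m)).compl_mem_cocompact] with v hfar hv
  rw [Set.mem_compl_iff, mem_closedBall_iff_norm, not_le] at hfar
  exact hlower.le_of_two_mul_norm_div_le hm hu hv hfar.le

theorem HasQuadraticUpperBoundOn.apply_sub_smul_le (hupper : HasQuadraticUpperBoundOn f g L K)
    (hL : 0 < L) {u d : E} (hd : ‖d‖ = 1) (hu : u ∈ K) (hstep : u - (⟪g u, d⟫ / L) • d ∈ K) :
    f (u - (⟪g u, d⟫ / L) • d) ≤ f u - ⟪g u, d⟫ ^ 2 / (2 * L) := by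
  refine (hupper u hu _ hstep).trans_eq ?_
  rw [sub_sub_cancel_left, inner_neg_right, real_inner_smul_right, norm_neg, norm_smul, hd, mul_one,
    Real.norm_eq_abs, sq_abs]
  field_simp
  ring

end QuadraticBounds

section SupportedVectors

variable {ι : Type*}

/-- The coordinate subspace of the vectors that vanish outside `S`, over which `E(S)` minimises. -/
def supportedVectors (S : Finset ι) : Submodule ℝ (EuclideanSpace ℝ ι) where
  carrier := {w | ∀ j ∉ S, w j = 0}
  zero_mem' _ _ := rfl
  add_mem' hv hw j hj := by simp [hv j hj, hw j hj]
  smul_mem' c w hw j hj := by simp [hw j hj]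

theorem supportedVectors_mono {S T : Finset ι} (hST : S ⊆ T) :
    supportedVectors S ≤ supportedVectors T :=
  fun _ hw j hj => hw j (Finset.notMem_mono hST hj)

theorem single_mem_supportedVectors [DecidableEq ι] {S : Finset ι} {j : ι} (hj : j ∈ S) (a : ℝ) :
    EuclideanSpace.single j a ∈ supportedVectors S := fun i hi => by
  simp [ne_of_mem_of_not_mem hj hi |>.symm]

theorem ncard_support_union_le_card {S : Finset ι} {u v : EuclideanSpace ℝ ι}
    (hu : u ∈ supportedVectors S) (hv : v ∈ supportedVectors S) :
    (Function.support (fun j => u j) ∪ Function.support (fun j => v j)).ncard ≤ S.card := by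
  rw [← Set.ncard_coe_finset]
  exact Set.ncard_le_ncard <|
    Set.union_subset (Function.support_subset_iff'.2 hu) (Function.support_subset_iff'.2 hv)

theorem neg_sq_div_le_mul_add_sq {m : ℝ} (hm : 0 < m) (a b : ℝ) :
    -(a ^ 2 / (2 * m)) ≤ a * b + m / 2 * b ^ 2 := by
  have hsquare : a * b + m / 2 * b ^ 2 + a ^ 2 / (2 * m) = (a + m * b) ^ 2 / (2 * m) := by
    field_simp
    ring
  have hnonneg : 0 ≤ (a + m * b) ^ 2 / (2 * m) := by positivity
  linarith

variable [Fintype ι]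

theorem neg_sum_sq_div_le_inner_add_norm_sq {S : Finset ι} {m : ℝ} (hm : 0 < m)
    (a : EuclideanSpace ℝ ι) {d : EuclideanSpace ℝ ι} (hd : d ∈ supportedVectors S) :
    -∑ j ∈ S, a j ^ 2 / (2 * m) ≤ ⟪a, d⟫ + m / 2 * ‖d‖ ^ 2 := by
  have hcoord : ⟪a, d⟫ + m / 2 * ‖d‖ ^ 2 = ∑ j ∈ S, (a j * d j + m / 2 * d j ^ 2) := by
    rw [EuclideanSpace.real_norm_sq_eq, PiLp.inner_apply, Finset.mul_sum,
      ← Finset.sum_add_distrib, Finset.sum_subset S.subset_univ fun j _ hj => by simp [hd j hj]]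
    exact Finset.sum_congr rfl fun j _ => by simp [mul_comm]
  rw [hcoord, ← Finset.sum_neg_distrib]
  exact Finset.sum_le_sum fun j _ => neg_sq_div_le_mul_add_sq hm (a j) (d j)

end SupportedVectors

section CoordinateDescent

variable {ι : Type*} [Fintype ι] {f : EuclideanSpace ℝ ι → ℝ}
  {g : EuclideanSpace ℝ ι → EuclideanSpace ℝ ι} {m L : ℝ} {S : Finset ι} {u v : EuclideanSpace ℝ ι}

theorem HasQuadraticLowerBoundOn.sub_le_sum_sq_div
    (hlower : HasQuadraticLowerBoundOn f g m (supportedVectors S)) (hm : 0 < m)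
    (hu : u ∈ supportedVectors S) (hv : v ∈ supportedVectors S) :
    f u - f v ≤ ∑ j ∈ S, g u j ^ 2 / (2 * m) := by
  linarith [hlower u hu v hv, neg_sum_sq_div_le_inner_add_norm_sq hm (g u) (sub_mem hv hu)]

theorem HasQuadraticUpperBoundOn.exists_le_sub_sq_div
    (hupper : HasQuadraticUpperBoundOn f g L (supportedVectors S)) (hL : 0 < L)
    (hu : u ∈ supportedVectors S) {j : ι} (hj : j ∈ S) :
    ∃ w ∈ supportedVectors S, f w ≤ f u - g u j ^ 2 / (2 * L) := by
  classical
  have hinner : ⟪g u, EuclideanSpace.single j (1 : ℝ)⟫ = g u j := by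
    simp [EuclideanSpace.inner_single_right]
  have hstep : u - (g u j / L) • EuclideanSpace.single j 1 ∈ supportedVectors S :=
    sub_mem hu (Submodule.smul_mem _ _ (single_mem_supportedVectors hj 1))
  rw [← hinner] at hstep ⊢
  exact ⟨_, hstep, hupper.apply_sub_smul_le hL (by simp) hu hstep⟩

theorem HasQuadraticUpperBoundOn.apply_eq_zero_of_isMinOn
    (hupper : HasQuadraticUpperBoundOn f g L (supportedVectors S)) (hL : 0 < L)
    (hu : u ∈ supportedVectors S) (hmin : IsMinOn f (supportedVectors S) u) {j : ι} (hj : j ∈ S) :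
    g u j = 0 := by
  obtain ⟨w, hw, hdescent⟩ := hupper.exists_le_sub_sq_div hL hu hj
  have hnonpos : g u j ^ 2 / (2 * L) ≤ 0 := by linarith [isMinOn_iff.1 hmin w hw]
  have hsq : g u j ^ 2 ≤ 0 := by simpa using (div_le_iff₀ (by positivity)).1 hnonpos
  exact sq_nonpos_iff _ |>.1 hsq

end CoordinateDescent

section SupportedInf

variable {ι : Type*} {f : EuclideanSpace ℝ ι → ℝ} {S T : Finset ι} {u w : EuclideanSpace ℝ ι}

/-- `E(S)`, the infimum of `f` over the vectors supported on `S`, for an arbitrary index type;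
it has the junk value `0` if `f` is not bounded below there. -/
noncomputable def supportedInf (f : EuclideanSpace ℝ ι → ℝ) (S : Finset ι) : ℝ :=
  sInf (f '' supportedVectors S)

theorem EInf_eq_supportedInf {n : ℕ} (f : EuclideanSpace ℝ (Fin n) → ℝ) (S : Finset (Fin n)) :
    EInf f S = supportedInf f S :=
  congrArg sInf <| Set.ext fun _ => exists_congr fun _ => and_congr_right fun _ => eq_comm

theorem supportedInf_eq_of_isMinOn (hu : u ∈ supportedVectors S)
    (hmin : IsMinOn f (supportedVectors S) u) : supportedInf f S = f u :=
  IsLeast.csInf_eq ⟨Set.mem_image_of_mem f hu, Set.forall_mem_image.2 (isMinOn_iff.1 hmin)⟩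

variable [Fintype ι] {g : EuclideanSpace ℝ ι → EuclideanSpace ℝ ι} {m L : ℝ}

theorem HasQuadraticLowerBoundOn.exists_isMinOn_supportedVectors
    (hlower : HasQuadraticLowerBoundOn f g m (supportedVectors S)) (hm : 0 < m)
    (hupper : HasQuadraticUpperBoundOn f g L (supportedVectors S)) :
    ∃ u ∈ supportedVectors S, IsMinOn f (supportedVectors S) u :=
  hlower.exists_isMinOn hm (hlower.continuousOn hupper)
    (supportedVectors S).closed_of_finiteDimensional (supportedVectors S).nonempty

theorem HasQuadraticLowerBoundOn.supportedInf_le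
    (hlower : HasQuadraticLowerBoundOn f g m (supportedVectors S)) (hm : 0 < m)
    (hupper : HasQuadraticUpperBoundOn f g L (supportedVectors S))
    (hw : w ∈ supportedVectors S) : supportedInf f S ≤ f w := by
  obtain ⟨u, hu, hmin⟩ := hlower.exists_isMinOn_supportedVectors hm hupper
  exact (supportedInf_eq_of_isMinOn hu hmin).trans_le (isMinOn_iff.1 hmin w hw)

theorem HasQuadraticLowerBoundOn.sq_div_le_sub_supportedInf
    (hlower : HasQuadraticLowerBoundOn f g m (supportedVectors S)) (hm : 0 < m)
    (hupper : HasQuadraticUpperBoundOn f g L (supportedVectors S)) (hL : 0 < L)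
    (hu : u ∈ supportedVectors S) {j : ι} (hj : j ∈ S) :
    g u j ^ 2 / (2 * L) ≤ f u - supportedInf f S := by
  obtain ⟨w, hw, hdescent⟩ := hupper.exists_le_sub_sq_div hL hu hj
  linarith [hlower.supportedInf_le hm hupper hw]

theorem HasQuadraticLowerBoundOn.sub_supportedInf_union_le [DecidableEq ι]
    (hlower : HasQuadraticLowerBoundOn f g m (supportedVectors (S ∪ T))) (hm : 0 < m)
    (hupper : HasQuadraticUpperBoundOn f g L (supportedVectors (S ∪ T))) (hL : 0 < L)
    (hu : u ∈ supportedVectors S) (hmin : IsMinOn f (supportedVectors S) u) :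
    f u - supportedInf f (S ∪ T) ≤ ∑ j ∈ T, g u j ^ 2 / (2 * m) := by
  have hS : supportedVectors S ≤ supportedVectors (S ∪ T) :=
    supportedVectors_mono Finset.subset_union_left
  obtain ⟨v, hv, hvmin⟩ := hlower.exists_isMinOn_supportedVectors hm hupper
  have hgrad : ∀ j ∈ S, g u j = 0 := fun _ hj =>
    (hupper.mono hS).apply_eq_zero_of_isMinOn hL hu hmin hj
  calc f u - supportedInf f (S ∪ T)
      = f u - f v := by rw [supportedInf_eq_of_isMinOn hv hvmin]
    _ ≤ ∑ j ∈ S ∪ T, g u j ^ 2 / (2 * m) := hlower.sub_le_sum_sq_div hm (hS hu) hv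
    _ = ∑ j ∈ T, g u j ^ 2 / (2 * m) :=
      Finset.sum_union_eq_right fun j hj _ => by simp [hgrad j hj]

end SupportedInf

theorem weak_submodularity_of_rsc_rsm_general {ι : Type*} [Fintype ι] [DecidableEq ι]
    {f : EuclideanSpace ℝ ι → ℝ} {g : EuclideanSpace ℝ ι → EuclideanSpace ℝ ι} {m L : ℝ}
    (hm : 0 < m) (hL : 0 < L) {S T : Finset ι}
    (hlower : HasQuadraticLowerBoundOn f g m (supportedVectors (S ∪ T)))
    (hupper : HasQuadraticUpperBoundOn f g L (supportedVectors (S ∪ T))) :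
    m / L * (supportedInf f S - supportedInf f (S ∪ T)) ≤
      ∑ j ∈ T, (supportedInf f S - supportedInf f (S ∪ {j})) := by
  have hS : supportedVectors S ≤ supportedVectors (S ∪ T) :=
    supportedVectors_mono Finset.subset_union_left
  have hSj {j : ι} (hj : j ∈ T) : supportedVectors (S ∪ {j}) ≤ supportedVectors (S ∪ T) :=
    supportedVectors_mono (Finset.union_subset_union_right (Finset.singleton_subset_iff.2 hj))
  obtain ⟨u, hu, hmin⟩ := (hlower.mono hS).exists_isMinOn_supportedVectors hm (hupper.mono hS)
  rw [supportedInf_eq_of_isMinOn hu hmin]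
  calc m / L * (f u - supportedInf f (S ∪ T))
      ≤ m / L * ∑ j ∈ T, g u j ^ 2 / (2 * m) := by
        gcongr
        exact hlower.sub_supportedInf_union_le hm hupper hL hu hmin
    _ = ∑ j ∈ T, g u j ^ 2 / (2 * L) := by
        rw [Finset.mul_sum]
        exact Finset.sum_congr rfl fun j _ => by field_simp
    _ ≤ ∑ j ∈ T, (f u - supportedInf f (S ∪ {j})) := Finset.sum_le_sum fun j hj =>
        (hlower.mono (hSj hj)).sq_div_le_sub_supportedInf hm (hupper.mono (hSj hj)) hL
          (supportedVectors_mono Finset.subset_union_left hu) (by simp)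

/-- Restricted strong convexity and restricted smoothness imply the weak
submodularity inequality
`∑_{j∈T} (E(S) − E(S∪{j})) ≥ (m/L)·(E(S) − E(S∪T))` for disjoint `S, T` with
`|S ∪ T| ≤ M`. -/
theorem weak_submodularity_of_rsc_rsm
    {n : ℕ} (hn : 1 ≤ n) (f : EuclideanSpace ℝ (Fin n) → ℝ)
    (hf : Differentiable ℝ f)
    (m L : ℝ) (hm : 0 < m) (hmL : m ≤ L) (M : ℕ)
    (hrsc : ∀ u v : EuclideanSpace ℝ (Fin n),
      f v ≥ f u + ⟪gradient f u, v - u⟫ + (m / 2) * ‖v - u‖ ^ 2)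
    (hrsm : ∀ u v : EuclideanSpace ℝ (Fin n),
      (Function.support (fun j => u j) ∪ Function.support (fun j => v j)).ncard ≤ M →
      f v ≤ f u + ⟪gradient f u, v - u⟫ + (L / 2) * ‖v - u‖ ^ 2)
    (hattained : ∀ S : Finset (Fin n),
      ∃ w : EuclideanSpace ℝ (Fin n), (∀ j ∉ S, w j = 0) ∧ f w = EInf f S)
    (S T : Finset (Fin n)) (hST : Disjoint S T) (hcard : (S ∪ T).card ≤ M) :
    ∑ j ∈ T, (EInf f S - EInf f (S ∪ {j})) ≥
      (m / L) * (EInf f S - EInf f (S ∪ T)) := by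
  simp only [EInf_eq_supportedInf]
  exact weak_submodularity_of_rsc_rsm_general hm (hm.trans_le hmL) (fun u _ v _ => hrsc u v)
    fun u hu v hv => hrsm u v ((ncard_support_union_le_card hu hv).trans hcard)
end

section
/- Let V be a finite set, γ ∈ (0,1], and let F be a set function on subsets of V that is monotone non-decreasing (S ⊆ T implies F(S) ≤ F(T)) and satisfies ∑_{j∈T} (F(S∪{j}) − F(S)) ≥ γ·(F(S∪T) − F(S)) for all disjoint S, T ⊆ V. Then for every S ⊆ V and every S* ⊆ V with |S*| ≤ k and F(S) < F(S*), there exists j ∈ S* \ S such that F(S∪{j}) − F(S) ≥ (γ/k)·(F(S*) − F(S)). -/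
open scoped BigOperators

section WeakSubmodularity

variable {ι V 𝕜 : Type*} [DecidableEq V] [Field 𝕜] [LinearOrder 𝕜] [IsStrictOrderedRing 𝕜]

theorem exists_div_le_of_le_sum {s : Finset ι} {f : ι → 𝕜} {c : 𝕜} {k : ℕ}
    (hs : s.Nonempty) (hk : s.card ≤ k) (hc : 0 ≤ c) (hsum : c ≤ ∑ i ∈ s, f i) :
    ∃ i ∈ s, c / k ≤ f i := by
  have card_pos : (0 : 𝕜) < s.card := Nat.cast_pos.mpr hs.card_pos
  refine Finset.exists_le_of_sum_le hs ?_
  calc ∑ _i ∈ s, c / k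
      ≤ ∑ _i ∈ s, c / s.card := by gcongr
    _ = c := by rw [Finset.sum_const, nsmul_eq_mul, mul_div_cancel₀ c card_pos.ne']
    _ ≤ ∑ i ∈ s, f i := hsum

/-- `γ`-weak submodularity of a set function `F`: adding the elements of a set `T` disjoint from `S`
individually to `S` yields gains whose sum is at least `γ` times the gain from adding all of `T`. -/
def IsWeaklySubmodular (γ : 𝕜) (F : Finset V → 𝕜) : Prop :=
  ∀ S T : Finset V, Disjoint S T → γ * (F (S ∪ T) - F S) ≤ ∑ j ∈ T, (F (S ∪ {j}) - F S)

variable {γ : 𝕜} {F : Finset V → 𝕜} {k : ℕ} {S T : Finset V}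

theorem IsWeaklySubmodular.exists_mul_gain_union_le (hF : IsWeaklySubmodular γ F) (hγ : 0 ≤ γ)
    (hk : T.card ≤ k) (hgain : F S < F (S ∪ T)) :
    ∃ j ∈ T \ S, γ / k * (F (S ∪ T) - F S) ≤ F (S ∪ {j}) - F S := by
  have sdiff_nonempty : (T \ S).Nonempty := by
    rw [Finset.sdiff_nonempty]
    intro hTS
    rw [Finset.union_eq_left.mpr hTS] at hgain
    exact hgain.false
  have card_sdiff_le : (T \ S).card ≤ k := (Finset.card_le_card Finset.sdiff_subset).trans hk
  have le_sum_gains : γ * (F (S ∪ T) - F S) ≤ ∑ j ∈ T \ S, (F (S ∪ {j}) - F S) := by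
    simpa only [Finset.union_sdiff_self_eq_union] using hF S (T \ S) Finset.disjoint_sdiff
  rw [div_mul_eq_mul_div]
  exact exists_div_le_of_le_sum sdiff_nonempty card_sdiff_le
    (mul_nonneg hγ (sub_nonneg.mpr hgain.le)) le_sum_gains

theorem greedy_step_progress_general (hF : IsWeaklySubmodular γ F) (hγ : 0 ≤ γ)
    (hk : T.card ≤ k) (hlt : F S < F T) (hunion : F T ≤ F (S ∪ T)) :
    ∃ j ∈ T \ S, γ / k * (F T - F S) ≤ F (S ∪ {j}) - F S := by
  obtain ⟨j, hj, hgain⟩ := hF.exists_mul_gain_union_le hγ hk (hlt.trans_le hunion)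
  refine ⟨j, hj, le_trans ?_ hgain⟩
  gcongr

end WeakSubmodularity

/-- Per-step progress guarantee for greedy selection on a `γ`-weakly
submodular monotone set function: if `|S*| ≤ k` and `F(S) < F(S*)`, some
`j ∈ S* \ S` gives marginal gain at least `(γ/k)·(F(S*) − F(S))`. -/
theorem greedy_step_progress
    {V : Type*} [Fintype V] [DecidableEq V]
    (γ : ℝ) (hγ0 : 0 < γ) (hγ1 : γ ≤ 1)
    (F : Finset V → ℝ)
    (hmono : ∀ S T : Finset V, S ⊆ T → F S ≤ F T)
    (hweak : ∀ S T : Finset V, Disjoint S T →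
      ∑ j ∈ T, (F (S ∪ {j}) - F S) ≥ γ * (F (S ∪ T) - F S))
    (k : ℕ) (S Sstar : Finset V) (hk : Sstar.card ≤ k)
    (hFS : F S < F Sstar) :
    ∃ j ∈ Sstar \ S, F (S ∪ {j}) - F S ≥ (γ / k) * (F Sstar - F S) :=
  greedy_step_progress_general hweak hγ0.le hk hFS (hmono _ _ Finset.subset_union_right)
end
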